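/- Let K be a field of characteristic 2, R = K[x_1, ..., x_d] a polynomial ring, and G = Z/2Z acting linearly on R. Let S = K[x_1, ..., x_d, y_1, ..., y_d] and let I_G be the Derksen ideal of this action. Then I_G^{(n)} = I_G^n for every n ≥ 1. -/

import Mathlib

/-!
The Derksen ideal of a group with two elements is the intersection of two primes `P₁, P₂`, each
generated by linear forms. Any two subspaces of a vector space are spanned by subsets of one common
basis, so after a linear change of variables `P₁` and `P₂` are generated by sets `T₁`, `T₂` of
variables. A monomial lies in `P₁ⁿ ⊓ P₂ⁿ` iff its degrees in `T₁` and in `T₂` are both at least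
`n`; splitting off the variables in `T₁ ∩ T₂` shows that it is then in
`(P₁ ⊓ P₂)^c * (P₁ * P₂)^(n - c)`, with `c` its degree in `T₁ ∩ T₂`, so
`P₁ⁿ ⊓ P₂ⁿ ≤ (P₁ ⊓ P₂)ⁿ` (`varIdeal_pow_inf_le`).

It remains to see that the symbolic power lies in `P₁ⁿ ⊓ P₂ⁿ`
(`symbolicPower_inf_eq`). The minimal primes of `P₁ ⊓ P₂` are associated, and a power of an ideal
`P` generated by variables is `P`-primary: giving the variables in `T` weight one turns `f ∈ Pⁿ`
into divisibility of a polynomial by the `n`-th power of the prime element `t`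
(`mem_varIdeal_pow_iff_dvd`).
-/

open MvPolynomial

/-- The `n`-th symbolic power of an ideal `I`:
`I^{(n)} = ⋂_{p ∈ Ass(A/I)} (Iⁿ A_p ∩ A)`. -/
noncomputable def symbolicPower {A : Type*} [CommRing A] (I : Ideal A) (n : ℕ) : Ideal A :=
  ⨅ (p : Ideal A) (hp : p ∈ associatedPrimes A (A ⧸ I)),
    haveI : p.IsPrime := hp.isPrime
    Ideal.comap (algebraMap A (Localization.AtPrime p))
      (Ideal.map (algebraMap A (Localization.AtPrime p)) (I ^ n))

/-- The component `(y₁ - g(x₁), …, y_d - g(x_d))` of the Derksen ideal, in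
`S = K[x₁, …, x_d, y₁, …, y_d]`, where the `x`-variables are indexed by `Sum.inl`
and the `y`-variables by `Sum.inr`. -/
noncomputable def derksenComponent (K : Type*) [Field K] (d : ℕ) {G : Type*} [Group G]
    [MulSemiringAction G (MvPolynomial (Fin d) K)] (g : G) :
    Ideal (MvPolynomial (Fin d ⊕ Fin d) K) :=
  Ideal.span (Set.range fun i : Fin d =>
    X (Sum.inr i) - rename Sum.inl (g • (X i : MvPolynomial (Fin d) K)))

/-- The Derksen ideal `I_G = ⋂_{g ∈ G} (y₁ - g(x₁), …, y_d - g(x_d))`. -/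
noncomputable def derksenIdeal (K : Type*) [Field K] (d : ℕ) (G : Type*) [Group G]
    [MulSemiringAction G (MvPolynomial (Fin d) K)] :
    Ideal (MvPolynomial (Fin d ⊕ Fin d) K) :=
  ⨅ g : G, derksenComponent K d g


/-! ### Ideals generated by variables -/

section Variables

variable {K : Type*} [Field K] {ι : Type*}

/-- The ideal of `K[X_i : i ∈ ι]` generated by the variables with index in `T`. -/
noncomputable def varIdeal (K : Type*) [Field K] {ι : Type*} (T : Set ι) : Ideal (MvPolynomial ι K) :=
  Ideal.span (X '' T)

open Classical in
/-- The part of the exponent vector `m` supported on `T`. -/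
noncomputable def partIn (T : Set ι) (m : ι →₀ ℕ) : ι →₀ ℕ := m.filter (· ∈ T)

/-- The degree of the monomial with exponent `m` in the variables with index in `T`. -/
noncomputable def degIn (T : Set ι) (m : ι →₀ ℕ) : ℕ := (partIn T m).degree

open Classical in
/-- The substitution `X_i ↦ t X_i` for `i ∈ T` and `X_i ↦ X_i` for `i ∉ T`, with `t` a new
variable. -/
noncomputable def weightHom (K : Type*) [Field K] {ι : Type*} (T : Set ι) :
    MvPolynomial ι K →ₐ[K] Polynomial (MvPolynomial ι K) :=
  aeval fun i => Polynomial.C (X i) * Polynomial.X ^ (if i ∈ T then 1 else 0)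

lemma degIn_add (T : Set ι) (m m' : ι →₀ ℕ) : degIn T (m + m') = degIn T m + degIn T m' := by
  classical
  simp [degIn, partIn, Finsupp.filter_add]

lemma weightHom_monomial (T : Set ι) (m : ι →₀ ℕ) (a : K) :
    weightHom K T (monomial m a) =
      Polynomial.C (monomial m a) * Polynomial.X ^ degIn T m := by
  classical
  induction m using Finsupp.induction_linear generalizing a with
  | zero =>
    have : degIn T (0 : ι →₀ ℕ) = 0 := by simpa using degIn_add T 0 0
    rw [this]
    simp [weightHom]
  | add m m' h h' =>
    have : (monomial (m + m') a : MvPolynomial ι K) = monomial m a * monomial m' 1 := by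
      simp [monomial_mul]
    rw [this, map_mul, h, h', degIn_add, pow_add, map_mul]
    ring
  | single i k =>
    have hd : degIn T (Finsupp.single i k) = (if i ∈ T then 1 else 0) * k := by
      unfold degIn partIn
      split_ifs with hi
      · rw [Finsupp.filter_single_of_pos _ hi]; simp
      · rw [Finsupp.filter_single_of_neg _ hi]; simp
    have : (monomial (Finsupp.single i k) a : MvPolynomial ι K) = C a * X i ^ k :=
      (C_mul_X_pow_eq_monomial).symm
    rw [hd, this, map_mul, map_pow, pow_mul]
    simp only [weightHom, aeval_X, mul_pow, map_mul, map_pow]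
    rw [← algebraMap_eq, AlgHom.commutes]
    simp [mul_assoc, IsScalarTower.algebraMap_apply K (MvPolynomial ι K) (Polynomial _)]

lemma coeff_coeff_weightHom (T : Set ι) (f : MvPolynomial ι K) (m : ι →₀ ℕ) :
    coeff m ((weightHom K T f).coeff (degIn T m)) = coeff m f := by
  classical
  induction f using MvPolynomial.induction_on' with
  | monomial u a =>
    rw [weightHom_monomial, Polynomial.coeff_C_mul_X_pow]
    by_cases h : u = m
    · subst h; simp
    · split_ifs <;> simp [coeff_monomial, h]
  | add p q hp hq => simp [hp, hq]

/-- A monomial supported on `T` of degree `n` lies in the `n`-th power of `varIdeal K T`. -/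
lemma monomial_mem_varIdeal_pow (T : Set ι) (m : ι →₀ ℕ) (hm : ∀ i ∈ m.support, i ∈ T) :
    (monomial m 1 : MvPolynomial ι K) ∈ varIdeal K T ^ m.degree := by
  rw [monomial_eq, Finsupp.degree_apply, ← Finset.prod_pow_eq_pow_sum, map_one, one_mul]
  have hX : ∀ i ∈ m.support, (X i : MvPolynomial ι K) ∈ varIdeal K T := fun i hi =>
    Ideal.subset_span ⟨i, hm i hi, rfl⟩
  exact Ideal.prod_mem_prod fun i hi => Ideal.pow_mem_pow (hX i hi) _

lemma monomial_partIn_mem_varIdeal_pow (T : Set ι) (m : ι →₀ ℕ) :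
    (monomial (partIn T m) 1 : MvPolynomial ι K) ∈ varIdeal K T ^ degIn T m :=
  monomial_mem_varIdeal_pow T _ fun i hi => by simp [partIn] at hi; exact hi.2

lemma monomial_mem_of_le_degIn {T : Set ι} {n : ℕ} {m : ι →₀ ℕ} (h : n ≤ degIn T m) (a : K) :
    monomial m a ∈ varIdeal K T ^ n := by
  classical
  have : (monomial m a : MvPolynomial ι K) =
      monomial (partIn Tᶜ m) a * monomial (partIn T m) 1 := by
    rw [monomial_mul, mul_one]
    congr 2
    ext i
    by_cases h : i ∈ T <;> simp [partIn, h]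
  rw [this]
  exact Ideal.mul_mem_left _ _ (Ideal.pow_le_pow_right h (monomial_partIn_mem_varIdeal_pow T m))

lemma dvd_of_mem_varIdeal_pow {T : Set ι} {n : ℕ} {f : MvPolynomial ι K}
    (hf : f ∈ varIdeal K T ^ n) : Polynomial.X ^ n ∣ weightHom K T f := by
  have h1 : varIdeal K T ≤ Ideal.comap (weightHom K T) (Ideal.span {Polynomial.X}) := by
    rw [varIdeal, Ideal.span_le]
    rintro _ ⟨i, hi, rfl⟩
    simp [weightHom, Ideal.mem_span_singleton, hi]
  have h2 := (Ideal.pow_right_mono h1 n).trans (Ideal.le_comap_pow _ n) hf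
  rwa [Ideal.mem_comap, Ideal.span_singleton_pow, Ideal.mem_span_singleton] at h2

lemma le_degIn_of_dvd {T : Set ι} {n : ℕ} {f : MvPolynomial ι K}
    (hf : Polynomial.X ^ n ∣ weightHom K T f) {m : ι →₀ ℕ} (hm : m ∈ f.support) :
    n ≤ degIn T m := by
  by_contra! h
  rw [Polynomial.X_pow_dvd_iff] at hf
  have := coeff_coeff_weightHom T f m
  rw [hf _ h, coeff_zero] at this
  exact (mem_support_iff.1 hm) this.symm

lemma mem_varIdeal_pow_iff_dvd {T : Set ι} {n : ℕ} {f : MvPolynomial ι K} :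
    f ∈ varIdeal K T ^ n ↔ Polynomial.X ^ n ∣ weightHom K T f := by
  refine ⟨dvd_of_mem_varIdeal_pow, fun h => ?_⟩
  rw [f.as_sum]
  exact Ideal.sum_mem _ fun m hm => monomial_mem_of_le_degIn (le_degIn_of_dvd h hm) _

lemma mem_varIdeal_iff_dvd {T : Set ι} {f : MvPolynomial ι K} :
    f ∈ varIdeal K T ↔ Polynomial.X ∣ weightHom K T f := by
  simpa using mem_varIdeal_pow_iff_dvd (T := T) (n := 1) (f := f)

instance varIdeal_isPrime (T : Set ι) : (varIdeal K T).IsPrime where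
  ne_top' h := by
    have h1 : (1 : MvPolynomial ι K) ∈ varIdeal K T := by rw [h]; trivial
    rw [mem_varIdeal_iff_dvd, map_one] at h1
    exact Polynomial.prime_X.not_dvd_one h1
  mem_or_mem' {a b} h := by
    rw [mem_varIdeal_iff_dvd, map_mul] at h
    simpa only [mem_varIdeal_iff_dvd] using Polynomial.prime_X.dvd_or_dvd h

/-- The powers of an ideal `P` generated by variables are `P`-primary. -/
lemma varIdeal_pow_primary (T : Set ι) (n : ℕ) (s f : MvPolynomial ι K)
    (hs : s ∉ varIdeal K T) (h : s * f ∈ varIdeal K T ^ n) : f ∈ varIdeal K T ^ n := by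
  rw [mem_varIdeal_pow_iff_dvd, map_mul] at h
  rw [mem_varIdeal_iff_dvd] at hs
  rw [mem_varIdeal_pow_iff_dvd]
  exact Polynomial.prime_X.pow_dvd_of_dvd_mul_left n hs h

lemma varIdeal_mono {T T' : Set ι} (h : T ⊆ T') : varIdeal K T ≤ varIdeal K T' :=
  Ideal.span_mono (Set.image_mono h)

lemma degIn_inter_add_degIn_diff (T T' : Set ι) (m : ι →₀ ℕ) :
    degIn (T ∩ T') m + degIn (T \ T') m = degIn T m := by
  classical
  rw [degIn, degIn, degIn, ← map_add]
  congr 1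
  ext i
  by_cases h : i ∈ T <;> by_cases h' : i ∈ T' <;> simp [partIn, h, h']

lemma varIdeal_pow_inf_le (T T' : Set ι) (n : ℕ) :
    varIdeal K T ^ n ⊓ varIdeal K T' ^ n ≤ (varIdeal K T ⊓ varIdeal K T') ^ n := by
  classical
  rintro f ⟨hf, hf'⟩
  rw [f.as_sum]
  refine Ideal.sum_mem _ fun m hm => ?_
  have h := le_degIn_of_dvd (dvd_of_mem_varIdeal_pow hf) hm
  have h' := le_degIn_of_dvd (dvd_of_mem_varIdeal_pow hf') hm
  rw [← degIn_inter_add_degIn_diff T' T, Set.inter_comm] at h'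
  rw [← degIn_inter_add_degIn_diff T T'] at h
  -- `c` counts the variables common to both ideals; the remaining ones are paired off.
  set c := degIn (T ∩ T') m with hc
  have hsplit : (monomial m (coeff m f) : MvPolynomial ι K) =
      monomial (partIn (T ∪ T')ᶜ m) (coeff m f) *
      (monomial (partIn (T ∩ T') m) 1 *
        (monomial (partIn (T \ T') m) 1 * monomial (partIn (T' \ T) m) 1)) := by
    simp only [monomial_mul, mul_one]
    congr 2
    ext i
    by_cases h : i ∈ T <;> by_cases h' : i ∈ T' <;> simp [partIn, h, h']
  have hinter : varIdeal K (T ∩ T') ≤ varIdeal K T ⊓ varIdeal K T' :=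
    le_inf (varIdeal_mono Set.inter_subset_left) (varIdeal_mono Set.inter_subset_right)
  have hprod : varIdeal K (T \ T') * varIdeal K (T' \ T) ≤ varIdeal K T ⊓ varIdeal K T' :=
    (Ideal.mul_mono (varIdeal_mono Set.sdiff_subset) (varIdeal_mono Set.sdiff_subset)).trans
      Ideal.mul_le_inf
  have hA := Ideal.pow_right_mono hinter c (monomial_partIn_mem_varIdeal_pow (T ∩ T') m)
  have hB : (monomial (partIn (T \ T') m) 1 * monomial (partIn (T' \ T) m) 1 :
      MvPolynomial ι K) ∈ (varIdeal K T ⊓ varIdeal K T') ^ (n - c) := by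
    refine Ideal.pow_right_mono hprod _ ?_
    rw [mul_pow]
    exact Ideal.mul_mem_mul
      (Ideal.pow_le_pow_right (show n - c ≤ degIn (T \ T') m by omega)
        (monomial_partIn_mem_varIdeal_pow _ m))
      (Ideal.pow_le_pow_right (show n - c ≤ degIn (T' \ T) m by omega)
        (monomial_partIn_mem_varIdeal_pow _ m))
  rw [hsplit]
  refine Ideal.mul_mem_left _ _ (Ideal.pow_le_pow_right (show n ≤ c + (n - c) by omega) ?_)
  rw [pow_add]
  exact Ideal.mul_mem_mul hA hB

end Variables

/-! ### Symbolic powers of an intersection of two primes -/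

section Symbolic

variable {A : Type*} [CommRing A]

lemma symbolicPower_le_pow_of_minimal [IsNoetherianRing A] {I P : Ideal A} (n : ℕ)
    (hP : P ∈ I.minimalPrimes)
    (hprim : ∀ s f, s ∉ P → s * f ∈ P ^ n → f ∈ P ^ n) : symbolicPower I n ≤ P ^ n := by
  have hass : P ∈ associatedPrimes A (A ⧸ I) := by
    apply Module.associatedPrimes.minimalPrimes_annihilator_subset_associatedPrimes
    rwa [Ideal.annihilator_quotient]
  have : P.IsPrime := hass.isPrime
  intro f hf
  rw [symbolicPower] at hf
  simp only [Submodule.mem_iInf] at hf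
  have h := hf P hass
  rw [Ideal.mem_comap, IsLocalization.algebraMap_mem_map_algebraMap_iff P.primeCompl] at h
  obtain ⟨s, hs, hsf⟩ := h
  exact hprim s f hs (Ideal.pow_right_mono hP.1.2 n hsf)

lemma pow_le_symbolicPower (I : Ideal A) (n : ℕ) : I ^ n ≤ symbolicPower I n :=
  le_iInf₂ fun _ _ => Ideal.le_comap_map

lemma symbolicPower_inf_eq [IsNoetherianRing A] {P Q : Ideal A} [hP : P.IsPrime] [hQ : Q.IsPrime]
    (n : ℕ)
    (hPprim : ∀ s f, s ∉ P → s * f ∈ P ^ n → f ∈ P ^ n)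
    (hQprim : ∀ s f, s ∉ Q → s * f ∈ Q ^ n → f ∈ Q ^ n)
    (hPQ : P ^ n ⊓ Q ^ n ≤ (P ⊓ Q) ^ n) : symbolicPower (P ⊓ Q) n = (P ⊓ Q) ^ n := by
  refine le_antisymm ?_ (pow_le_symbolicPower _ n)
  by_cases h : P ≤ Q
  · rw [inf_eq_left.2 h]
    refine symbolicPower_le_pow_of_minimal n ?_ hPprim
    rw [Ideal.minimalPrimes_eq_subsingleton_self]; rfl
  by_cases h' : Q ≤ P
  · rw [inf_eq_right.2 h']
    refine symbolicPower_le_pow_of_minimal n ?_ hQprim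
    rw [Ideal.minimalPrimes_eq_subsingleton_self]; rfl
  refine le_trans (le_inf (symbolicPower_le_pow_of_minimal n ⟨⟨hP, inf_le_left⟩, ?_⟩ hPprim)
    (symbolicPower_le_pow_of_minimal n ⟨⟨hQ, inf_le_right⟩, ?_⟩ hQprim)) hPQ
  · rintro q ⟨hq, hle⟩ hqP
    exact (hq.inf_le.1 hle).resolve_right fun hx => h' (hx.trans hqP)
  · rintro q ⟨hq, hle⟩ hqQ
    exact (hq.inf_le.1 hle).resolve_left fun hx => h (hx.trans hqQ)

end Symbolic

/-! ### Linear changes of variables -/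

section Linear

variable {K : Type*} [Field K]

/-- Two subspaces are spanned by subsets of a common basis. -/
lemma exists_adapted_basis {M : Type*} [AddCommGroup M] [Module K M] (V W : Submodule K M) :
    ∃ (B : Set M) (b : Module.Basis B K M) (T T' : Set B),
      Submodule.span K (b '' T) = V ∧ Submodule.span K (b '' T') = W := by
  obtain ⟨B₀, hB₀sub, -, hB₀span, hB₀⟩ := exists_linearIndepOn_id_extension
    (linearIndepOn_empty K (id : M → M)) (Set.empty_subset ((V ⊓ W : Submodule K M) : Set M))
  obtain ⟨B₁, hB₁sub, h01, hB₁span, hB₁⟩ := exists_linearIndepOn_id_extension hB₀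
    (hB₀sub.trans (show _ ⊆ (V : Set M) from fun _ h => h.1))
  obtain ⟨B₂, hB₂sub, h02, hB₂span, hB₂⟩ := exists_linearIndepOn_id_extension hB₀
    (hB₀sub.trans (show _ ⊆ (W : Set M) from fun _ h => h.2))
  have hV : Submodule.span K B₁ = V := le_antisymm (Submodule.span_le.2 hB₁sub) hB₁span
  have hW : Submodule.span K B₂ = W := le_antisymm (Submodule.span_le.2 hB₂sub) hB₂span
  have hdisj : Disjoint (Submodule.span K B₁) (Submodule.span K (B₂ \ B₀)) := by
    have h2 : Disjoint (Submodule.span K B₀) (Submodule.span K (B₂ \ B₀)) := by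
      rw [← Set.union_sdiff_cancel h02] at hB₂
      exact ((linearIndepOn_id_union_iff Set.disjoint_sdiff_right).1 hB₂).2.2
    rw [Submodule.disjoint_def] at h2 ⊢
    intro x hx hx'
    refine h2 x (hB₀span ⟨hV ▸ hx, ?_⟩) hx'
    exact hW ▸ Submodule.span_mono Set.sdiff_subset hx'
  have hU : LinearIndepOn K id (B₁ ∪ B₂) := by
    have := hB₁.id_union (hB₂.mono Set.sdiff_subset) hdisj
    refine this.mono fun x hx => ?_
    by_cases h : x ∈ B₀
    · exact Or.inl (h01 h)
    · exact hx.imp_right fun hx => ⟨hx, h⟩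
  refine ⟨_, Module.Basis.extend hU, (↑) ⁻¹' B₁, (↑) ⁻¹' B₂, ?_, ?_⟩
  · rw [Module.Basis.coe_extend, Subtype.image_preimage_coe, Set.inter_eq_right.2, hV]
    exact Set.subset_union_left.trans (Module.Basis.subset_extend hU)
  · rw [Module.Basis.coe_extend, Subtype.image_preimage_coe, Set.inter_eq_right.2, hW]
    exact Set.subset_union_right.trans (Module.Basis.subset_extend hU)

lemma ideal_span_image_span {M A : Type*} [AddCommGroup M] [Module K M] [CommRing A] [Algebra K A]
    (L : M →ₗ[K] A) (s : Set M) :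
    Ideal.span (L '' (Submodule.span K s : Set M)) = Ideal.span (L '' s) := by
  refine le_antisymm (Ideal.span_le.2 ?_) (Ideal.span_mono (Set.image_mono Submodule.subset_span))
  rintro _ ⟨x, hx, rfl⟩
  have : Submodule.span K s ≤ ((Ideal.span (L '' s)).restrictScalars K).comap L :=
    Submodule.span_le.2 fun y hy => Ideal.subset_span ⟨y, hy, rfl⟩
  exact this hx

/-- A linear change of variables adapted to the spans of `s` and `s'` reduces two ideals generated
by linear forms to two ideals generated by variables. -/
lemma symbolicPower_linear {σ : Type*} [Finite σ] (s s' : Set (MvPolynomial σ K))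
    (hs : ∀ f ∈ s, f.IsHomogeneous 1) (hs' : ∀ f ∈ s', f.IsHomogeneous 1) (n : ℕ) :
    symbolicPower (Ideal.span s ⊓ Ideal.span s') n = (Ideal.span s ⊓ Ideal.span s') ^ n := by
  let b₀ : Module.Basis σ K (σ →₀ K) := Finsupp.basisSingleOne
  let L : (σ →₀ K) →ₗ[K] MvPolynomial σ K :=
    (SymmetricAlgebra.equivMvPolynomial b₀).toLinearMap ∘ₗ SymmetricAlgebra.ι K (σ →₀ K)
  have hL : ∀ f : MvPolynomial σ K, f.IsHomogeneous 1 → f ∈ Set.range L := by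
    intro f hf
    rw [← mem_homogeneousSubmodule, homogeneousSubmodule_one_eq_span_X] at hf
    have : Submodule.span K (Set.range (X : σ → MvPolynomial σ K)) ≤ LinearMap.range L := by
      rw [Submodule.span_le]
      rintro _ ⟨i, rfl⟩
      exact ⟨b₀ i, by simp [L]⟩
    exact this hf
  obtain ⟨B, b, T, T', hT, hT'⟩ := exists_adapted_basis
    (Submodule.span K (L ⁻¹' s)) (Submodule.span K (L ⁻¹' s'))
  let e : MvPolynomial B K ≃ₐ[K] MvPolynomial σ K :=
    (SymmetricAlgebra.equivMvPolynomial b).symm.trans (SymmetricAlgebra.equivMvPolynomial b₀)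
  have he : ∀ i, e (X i) = L (b i) := fun i => by simp [e, L]
  have key : ∀ (s : Set (MvPolynomial σ K)) (T : Set B), (∀ f ∈ s, f.IsHomogeneous 1) →
      Submodule.span K (b '' T) = Submodule.span K (L ⁻¹' s) →
      Ideal.span s = (varIdeal K T).map e.toRingEquiv := by
    intro s T hs hT
    have h1 : L '' (L ⁻¹' s) = s :=
      Set.image_preimage_eq_of_subset fun f hf => hL f (hs f hf)
    have h2 : e.toRingEquiv '' (X '' T) = L '' (b '' T) := by
      rw [Set.image_image, Set.image_image]
      exact Set.image_congr fun i _ => he i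
    rw [varIdeal, Ideal.map_span, h2, ← ideal_span_image_span L (b '' T), hT,
      ideal_span_image_span, h1]
  set E : MvPolynomial B K ≃+* MvPolynomial σ K := e.toRingEquiv
  have hprim : ∀ (T : Set B) (u f : MvPolynomial σ K), u ∉ (varIdeal K T).map E →
      u * f ∈ (varIdeal K T).map E ^ n → f ∈ (varIdeal K T).map E ^ n := by
    intro T u f hu huf
    rw [← Ideal.comap_symm, Ideal.mem_comap] at hu
    rw [← Ideal.map_pow, ← Ideal.comap_symm, Ideal.mem_comap] at huf ⊢
    rw [map_mul] at huf
    exact varIdeal_pow_primary T n _ _ hu huf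
  rw [key s T hs hT, key s' T' hs' hT']
  have hprime : ∀ T : Set B, ((varIdeal K T).map E).IsPrime := fun T =>
    Ideal.map_isPrime_of_equiv E
  have := hprime T
  have := hprime T'
  refine symbolicPower_inf_eq n (hprim T) (hprim T') ?_
  have h := Ideal.comap_mono (f := E.symm) (varIdeal_pow_inf_le (K := K) T T' n)
  rw [Ideal.comap_inf] at h
  simp only [Ideal.comap_symm, Ideal.map_pow] at h
  refine h.trans (Ideal.pow_right_mono ?_ n)
  exact le_inf (Ideal.map_mono inf_le_left) (Ideal.map_mono inf_le_right)

end Linear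

/-- For `G = ℤ/2ℤ` acting linearly on `K[x₁, …, x_d]` with `char K = 2`, the symbolic
powers of the Derksen ideal coincide with its ordinary powers. -/
theorem symbolicPower_derksenIdeal_Z2_char_two {K : Type*} [Field K] [CharP K 2] (d : ℕ)
    [MulSemiringAction (Multiplicative (ZMod 2)) (MvPolynomial (Fin d) K)]
    (hC : ∀ (g : Multiplicative (ZMod 2)) (a : K),
      g • (C a : MvPolynomial (Fin d) K) = C a)
    (hlin : ∀ (g : Multiplicative (ZMod 2)) (i : Fin d),
      (g • (X i : MvPolynomial (Fin d) K)).IsHomogeneous 1)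
    (n : ℕ) (hn : 1 ≤ n) :
    symbolicPower (derksenIdeal K d (Multiplicative (ZMod 2))) n =
      derksenIdeal K d (Multiplicative (ZMod 2)) ^ n := by
  have hI : derksenIdeal K d (Multiplicative (ZMod 2)) =
      derksenComponent K d (1 : Multiplicative (ZMod 2)) ⊓
        derksenComponent K d (Multiplicative.ofAdd (1 : ZMod 2)) := by
    refine le_antisymm (le_inf (iInf_le _ _) (iInf_le _ _)) (le_iInf fun g => ?_)
    have hg : g = 1 ∨ g = Multiplicative.ofAdd (1 : ZMod 2) := by
      revert g; decide
    rcases hg with rfl | rfl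
    · exact inf_le_left
    · exact inf_le_right
  have hhom : ∀ g : Multiplicative (ZMod 2), ∀ f ∈ Set.range fun i : Fin d =>
      (X (Sum.inr i) - rename Sum.inl (g • (X i : MvPolynomial (Fin d) K)) :
        MvPolynomial (Fin d ⊕ Fin d) K), f.IsHomogeneous 1 := by
    rintro g _ ⟨i, rfl⟩
    exact (isHomogeneous_X K _).sub (hlin g i).rename_isHomogeneous
  rw [hI]
  exact symbolicPower_linear _ _ (hhom _) (hhom _) n
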